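/- arXiv:2309.03756 — 2 statements merged into one kernel-verified Lean document; each statement's English description precedes it below -/
import Mathlib

section
/- Let s < t, let λ ≥ 1, and let f, v : [s,t] → ℝ be smooth functions with f > 0 such that e^{2v(r)}·( −f''(r)/f(r) − v'(r)² ) ≥ λ holds for all r ∈ [s,t]. Let μ satisfy 0 < μ ≤ min{(t−s)/4, 1} and assume sup_{r ∈ [s, s+μ]} |v(r) − v(s+μ)| ≤ (1/4)√μ. Then there exists a smooth function u : [s,t] → ℝ such that: (1) u = v on [s+μ, t] and u is constant on [s, s+μ/2]; (2) |u(r) − v(s+μ)| ≤ μ for all r ∈ [s, s+μ]; (3) e^{2u(r)}·( −f''(r)/f(r) − u'(r)² ) ≥ λ·(1 − √μ) for all r ∈ [s,t]. -/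
/-!
The function `u` is obtained by damping the derivative of `v`: with a smooth cutoff `φ` that
vanishes on `(-∞, b - ε]` and equals `1` on `[b, ∞)`, where `b = s + μ`, put
`u r = v b + ∫ x in b..r, φ x * v' x`. Since `0 ≤ φ ≤ 1`, `(u')² ≤ (v')²`, hence
`-f''/f - (u')² ≥ -f''/f - (v')² ≥ λ e^{-2v}`, and the curvature loss is at most the factor
`e^{2(u - v)}`. As `v'` is bounded by some `M` on the compact interval and `u' = 0` to the left
of `b - ε`, `|u - v b| ≤ M ε` on `[s, b]`, which is at most `min μ (√μ / 4)` for small `ε`.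
Together with the oscillation hypothesis on `v` this gives `u - v ≥ -√μ / 2`, and
`e^{-√μ} ≥ 1 - √μ`.
-/

/-- The damped function: `u` is a primitive of `φ v'`, where `φ` is a smooth cutoff rising from
`0` at `a` to `1` at `b`. Hence `u` is constant before `a`, equals `v` after `b`, and
`|u'| ≤ |v'|` throughout, with no dependence on the width `b - a`. -/
lemma exists_damped (s t a b : ℝ) (hsa : s ≤ a) (hab : a < b) (hbt : b < t) (v : ℝ → ℝ)
    (hv : ContDiffOn ℝ (⊤ : ℕ∞) v (Set.Icc s t)) :
    ∃ u : ℝ → ℝ, ContDiffOn ℝ (⊤ : ℕ∞) u (Set.Icc s t) ∧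
      (∀ r ∈ Set.Icc b t, u r = v r) ∧
      (∀ r ∈ Set.Icc s a, u r = u a) ∧
      (∀ r ∈ Set.Icc s t, |derivWithin u (Set.Icc s t) r| ≤ |derivWithin v (Set.Icc s t) r|) := by
  have hst : s < t := by linarith
  have hud : UniqueDiffOn ℝ (Set.Icc s t) := uniqueDiffOn_Icc hst
  have hdv : ContDiffOn ℝ (⊤ : ℕ∞) (derivWithin v (Set.Icc s t)) (Set.Icc s t) :=
    ((contDiffOn_infty_iff_derivWithin hud).1 hv).2
  set dv := derivWithin v (Set.Icc s t) with hdv_def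
  set φ : ℝ → ℝ := fun x => Real.smoothTransition ((x - a) / (b - a)) with hφ
  have hφs : ContDiff ℝ (⊤ : ℕ∞) φ :=
    Real.smoothTransition.contDiff.comp ((contDiff_id.sub contDiff_const).div_const _)
  have hφ0 : ∀ x ≤ a, φ x = 0 := fun x hx =>
    Real.smoothTransition.zero_of_nonpos
      (div_nonpos_of_nonpos_of_nonneg (by linarith) (by linarith))
  have hφ1 : ∀ x, b ≤ x → φ x = 1 := fun x hx =>
    Real.smoothTransition.one_of_one_le (by rw [le_div_iff₀ (by linarith)]; linarith)
  have hg : ContDiffOn ℝ (⊤ : ℕ∞) (fun x => φ x * dv x) (Set.Icc s t) := hφs.contDiffOn.mul hdv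
  -- Extending the integrand continuously to `ℝ` makes the primitive differentiable everywhere.
  set G : ℝ → ℝ := Set.IccExtend hst.le (Set.domRestrict (Set.Icc s t) (fun x => φ x * dv x)) with hG
  have hGc : Continuous G := (continuousOn_iff_continuous_domRestrict.1 hg.continuousOn).Icc_extend'
  have hGe : ∀ x ∈ Set.Icc s t, G x = φ x * dv x := fun x hx => by
    rw [hG, Set.IccExtend_of_mem hst.le _ hx, Set.domRestrict_apply]
  have hd : ∀ r, HasDerivAt (fun r => v b + ∫ x in b..r, G x) (G r) r := fun r =>
    (hGc.integral_hasStrictDerivAt b r).hasDerivAt.const_add (v b)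
  have hdw : ∀ r ∈ Set.Icc s t,
      derivWithin (fun r => v b + ∫ x in b..r, G x) (Set.Icc s t) r = φ r * dv r := fun r hr => by
    rw [(hd r).hasDerivWithinAt.derivWithin (hud r hr), hGe r hr]
  refine ⟨fun r => v b + ∫ x in b..r, G x, ?_, ?_, ?_, ?_⟩
  · rw [contDiffOn_infty_iff_derivWithin hud]
    exact ⟨fun r _ => (hd r).differentiableAt.differentiableWithinAt, hg.congr hdw⟩
  · intro r hr
    have hsub : Set.Icc b r ⊆ Set.Icc s t := Set.Icc_subset_Icc (by linarith) hr.2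
    have := intervalIntegral.integral_eq_sub_of_hasDerivAt_of_le hr.1 (f := v) (f' := G)
      (hv.continuousOn.mono hsub) (fun x hx => by
        have hx' := hsub (Set.Ioo_subset_Icc_self hx)
        rw [hGe x hx', hφ1 x hx.1.le, one_mul]
        exact ((hv.differentiableOn (by simp)) x hx').hasDerivWithinAt.hasDerivAt
          (Icc_mem_nhds (by linarith [hx.1]) (by linarith [hx.2, hr.2])))
      (hGc.intervalIntegrable _ _)
    simp only [this]; ring
  · intro r hr
    have h0 : ∫ x in r..a, G x = 0 := by
      rw [intervalIntegral.integral_congr (g := fun _ => 0)]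
      · simp
      · intro x hx
        rw [Set.uIcc_of_le hr.2] at hx
        simp only
        rw [hGe x ⟨hr.1.trans hx.1, by linarith [hx.2]⟩, hφ0 x hx.2, zero_mul]
    have := intervalIntegral.integral_add_adjacent_intervals
      (hGc.intervalIntegrable (μ := MeasureTheory.volume) b r) (hGc.intervalIntegrable r a)
    simp only
    linarith
  · intro r hr
    rw [hdw r hr, abs_mul, abs_of_nonneg (Real.smoothTransition.nonneg _)]
    exact mul_le_of_le_one_left (abs_nonneg _) (Real.smoothTransition.le_one _)

/-- smoothing lemma for the warping factor `u` (Lemma 3.3 of the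
paper): a function `v` with the scalar curvature lower bound
`e^{2v}(-f''/f - (v')²) ≥ λ` can be modified near the left endpoint to become
constant there, with quantitative control of the loss in the bound. -/
theorem stmt_2 (s t lam μ : ℝ) (hst : s < t) (hlam : 1 ≤ lam)
    (f v : ℝ → ℝ)
    (hf : ContDiffOn ℝ (⊤ : ℕ∞) f (Set.Icc s t))
    (hv : ContDiffOn ℝ (⊤ : ℕ∞) v (Set.Icc s t))
    (hfpos : ∀ r ∈ Set.Icc s t, 0 < f r)
    (hcurv : ∀ r ∈ Set.Icc s t,
      Real.exp (2 * v r) *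
        (-(derivWithin (derivWithin f (Set.Icc s t)) (Set.Icc s t) r) / f r
          - (derivWithin v (Set.Icc s t) r) ^ 2) ≥ lam)
    (hμ0 : 0 < μ) (hμ1 : μ ≤ min ((t - s) / 4) 1)
    (hosc : ∀ r ∈ Set.Icc s (s + μ), |v r - v (s + μ)| ≤ (1 / 4) * Real.sqrt μ) :
    ∃ u : ℝ → ℝ, ContDiffOn ℝ (⊤ : ℕ∞) u (Set.Icc s t) ∧
      (∀ r ∈ Set.Icc (s + μ) t, u r = v r) ∧
      (∀ r ∈ Set.Icc s (s + μ / 2), u r = u s) ∧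
      (∀ r ∈ Set.Icc s (s + μ), |u r - v (s + μ)| ≤ μ) ∧
      (∀ r ∈ Set.Icc s t,
        Real.exp (2 * u r) *
          (-(derivWithin (derivWithin f (Set.Icc s t)) (Set.Icc s t) r) / f r
            - (derivWithin u (Set.Icc s t) r) ^ 2) ≥ lam * (1 - Real.sqrt μ)) := by
  have hμt : μ ≤ (t - s) / 4 := hμ1.trans (min_le_left _ _)
  have hsq : 0 < √μ := Real.sqrt_pos.2 hμ0
  have hud : UniqueDiffOn ℝ (Set.Icc s t) := uniqueDiffOn_Icc hst
  obtain ⟨M, hM⟩ := isCompact_Icc.exists_bound_of_continuousOn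
    ((contDiffOn_infty_iff_derivWithin hud).1 hv).2.continuousOn
  have hM0 : 0 ≤ M := (norm_nonneg _).trans (hM s ⟨le_rfl, hst.le⟩)
  obtain ⟨m, hm⟩ : ∃ m, m = min μ (√μ / 4) := ⟨_, rfl⟩
  have hm0 : 0 < m := hm ▸ lt_min hμ0 (by positivity)
  have hmμ : m ≤ μ := hm ▸ min_le_left _ _
  have hms : m ≤ √μ / 4 := hm ▸ min_le_right _ _
  obtain ⟨ε, hε⟩ : ∃ ε, ε = min (μ / 2) (m / (M + 1)) := ⟨_, rfl⟩
  have hε0 : 0 < ε := hε ▸ lt_min (by positivity) (by positivity)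
  have hεμ : ε ≤ μ / 2 := hε ▸ min_le_left _ _
  have hεm : M * ε ≤ m := by
    have : ε ≤ m / (M + 1) := hε ▸ min_le_right _ _
    rw [le_div_iff₀ (by positivity)] at this
    nlinarith
  obtain ⟨u, hu, huv, huc, hud'⟩ := exists_damped s t (s + μ - ε) (s + μ) (by linarith)
    (by linarith) (by linarith) v hv
  have hub : u (s + μ) = v (s + μ) := huv _ ⟨le_rfl, by linarith⟩
  have hnear : ∀ r ∈ Set.Icc (s + μ - ε) (s + μ), |u r - v (s + μ)| ≤ m := by
    intro r hr
    have := (convex_Icc s t).norm_image_sub_le_of_norm_derivWithin_le (f := u) (C := M)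
      (hu.differentiableOn (by simp)) (fun x hx => (hud' x hx).trans (hM x hx))
      (x := s + μ) (y := r) ⟨by linarith, by linarith⟩ ⟨by linarith [hr.1], by linarith [hr.2]⟩
    rw [hub, Real.norm_eq_abs, Real.norm_eq_abs, abs_sub_comm r, abs_of_nonneg
      (by linarith [hr.2] : 0 ≤ s + μ - r)] at this
    have : M * (s + μ - r) ≤ M * ε := mul_le_mul_of_nonneg_left (by linarith [hr.1]) hM0
    linarith
  have hum : ∀ r ∈ Set.Icc s (s + μ), |u r - v (s + μ)| ≤ m := by
    intro r hr
    rcases le_total r (s + μ - ε) with h | h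
    · rw [huc r ⟨hr.1, h⟩]
      exact hnear _ ⟨le_rfl, by linarith⟩
    · exact hnear r ⟨h, hr.2⟩
  have hlow : ∀ r ∈ Set.Icc s t, -(√μ / 2) ≤ u r - v r := by
    intro r hr
    rcases le_total r (s + μ) with h | h
    · have h1 := (abs_le.1 (hum r ⟨hr.1, h⟩)).1
      have h2 := (abs_le.1 (hosc r ⟨hr.1, h⟩)).2
      linarith
    · rw [huv r ⟨h, hr.2⟩]
      linarith
  refine ⟨u, hu, huv, ?_, fun r hr => (hum r hr).trans hmμ, ?_⟩
  · intro r hr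
    rw [huc r ⟨hr.1, by linarith [hr.2]⟩, huc s ⟨le_rfl, by linarith⟩]
  · intro r hr
    have hc := hcurv r hr
    have hsqle := sq_le_sq.2 (hud' r hr)
    set K := -(derivWithin (derivWithin f (Set.Icc s t)) (Set.Icc s t) r) / f r
    have h1 : Real.exp (2 * u r) = Real.exp (2 * (u r - v r)) * Real.exp (2 * v r) := by
      rw [← Real.exp_add]; ring_nf
    have h2 : 1 - √μ ≤ Real.exp (2 * (u r - v r)) := by
      have := Real.add_one_le_exp (2 * (u r - v r))
      linarith [hlow r hr]
    calc lam * (1 - √μ) ≤ lam * Real.exp (2 * (u r - v r)) :=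
          mul_le_mul_of_nonneg_left h2 (by linarith)
      _ ≤ (Real.exp (2 * v r) * (K - derivWithin v (Set.Icc s t) r ^ 2)) *
            Real.exp (2 * (u r - v r)) :=
          mul_le_mul_of_nonneg_right hc (Real.exp_pos _).le
      _ = Real.exp (2 * u r) * (K - derivWithin v (Set.Icc s t) r ^ 2) := by rw [h1]; ring
      _ ≤ Real.exp (2 * u r) * (K - derivWithin u (Set.Icc s t) r ^ 2) :=
          mul_le_mul_of_nonneg_left (by linarith) (Real.exp_pos _).le
end

section
/- Let t > 0, let u : (−t,t) → ℝ be smooth, and let f̄ : (−t,t) → ℝ be a positive C^{1,1} function which is smooth on (−t,0] and on [0,t). Assume there is λ ∈ ℝ such that e^{2u(r)}·( −f̄''(r)/f̄(r) − u'(r)² ) ≥ λ holds for all r ∈ (−t,0) and all r ∈ (0,t). Then for any μ ∈ (0, t/2) there exists a positive smooth function f : (−t,t) → ℝ such that: (1) ‖f − f̄‖_{C¹((−t,t))} ≤ μ and f = f̄ outside (−μ, μ); (2) e^{2u(r)}·( −f''(r)/f(r) − u'(r)² ) ≥ λ − μ for all r ∈ (−t,t). -/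
/-!
The function `fb` is replaced near the junction by a mollification. The curvature condition
`e^{2u} (-fb''/fb - (u')²) ≥ lam` is the one-sided bound `fb'' ≤ h` with
`h = -(lam e^{-2u} + (u')²) fb`, and `h` is continuous across `0` although `fb''` may jump there.
Since `fb'` is continuous, `fb'' ≤ h` off `0` bounds the increments of `fb'` by those of a
primitive of `h`. Convolving `fb'` with a narrow bump averages its increments, so the convolution
`Φ` is smooth, uniformly close to `fb'` and has `Φ' ≤ h + η` (`exists_smooth_approx`). A primitive
`F` of `Φ` is then `C¹`-close to `fb` with `F'' ≤ h + η` (`exists_smooth_approx_C1`).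

For a cutoff `χ` equal to `1` near `0` and supported in `(-μ, μ)`, put `f = fb + χ (F - fb)`.
Off `0`, `f'' = (1 - χ) fb'' + χ F'' + 2 χ' (F' - fb') + χ'' (F - fb)`. The first two terms are at
most `h + η` and the others are `O(η)`; near `0`, `f = F`. Hence `f'' ≤ h + O(η)` and
`f = fb + O(η)`, and for small `η` the error is absorbed by the slack `μ e^{-2u} fb`, which is
bounded below on `[-μ, μ]`.
-/

open MeasureTheory Filter Topology Convolution

/-- The mollifier estimate. If the increments of `G` over short intervals are controlled from
above by a continuous function `h` (that is, `G' ≤ h` in the weak sense), then the convolution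
`Φ` of `G` with a narrow bump is uniformly close to `G` and satisfies `Φ' ≤ h + η`: averaging
translates of `G` preserves upper bounds on increments. -/
lemma exists_smooth_approx (G h : ℝ → ℝ) (hG : Continuous G) {a b : ℝ} (hab : a < b)
    (hslope : ∀ x y c, -b ≤ x → x ≤ y → y ≤ b → (∀ q ∈ Set.Icc x y, h q ≤ c) →
      G y - G x ≤ c * (y - x))
    (hh : ContinuousOn h (Set.Icc (-b) b)) {η : ℝ} (hη : 0 < η) :
    ∃ Φ : ℝ → ℝ, ContDiff ℝ (⊤ : ℕ∞) Φ ∧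
      ∀ p ∈ Set.Icc (-a) a, |Φ p - G p| ≤ η ∧ deriv Φ p ≤ h p + η := by
  obtain ⟨δ₁, hδ₁, H₁⟩ := Metric.uniformContinuousOn_iff.1
    ((isCompact_Icc (a := -b) (b := b)).uniformContinuousOn_of_continuous hG.continuousOn) η hη
  obtain ⟨δ₂, hδ₂, H₂⟩ := Metric.uniformContinuousOn_iff.1
    ((isCompact_Icc (a := -b) (b := b)).uniformContinuousOn_of_continuous hh) η hη
  obtain ⟨δ, hδ, hd₁, hd₂, hd₃⟩ : ∃ δ > 0, δ ≤ δ₁ ∧ 2 * δ < δ₂ ∧ 2 * δ < b - a := by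
    refine ⟨min δ₁ (min (δ₂ / 3) ((b - a) / 3)), ?_, min_le_left _ _, ?_, ?_⟩
    · have : 0 < b - a := by linarith
      positivity
    · have := (min_le_right δ₁ (min (δ₂ / 3) ((b - a) / 3))).trans (min_le_left _ _)
      linarith
    · have := (min_le_right δ₁ (min (δ₂ / 3) ((b - a) / 3))).trans (min_le_right _ _)
      linarith
  let φ : ContDiffBump (0 : ℝ) := ⟨δ / 2, δ, by linarith, by linarith⟩
  have hcs : HasCompactSupport (φ.normed volume) := φ.hasCompactSupport_normed
  have hcont : Continuous (φ.normed volume) := φ.continuous_normed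
  let Φ : ℝ → ℝ := φ.normed volume ⋆[ContinuousLinearMap.lsmul ℝ ℝ, volume] G
  have hΦ : ContDiff ℝ (⊤ : ℕ∞) Φ :=
    hcs.contDiff_convolution_left _ φ.contDiff_normed hG.locallyIntegrable
  have hΦx (x : ℝ) : Φ x = ∫ s, φ.normed volume s * G (x - s) := by
    simp [Φ, convolution_def]
  have hint (k : ℝ → ℝ) (hk : Continuous k) :
      Integrable (fun s ↦ φ.normed volume s * k s) volume :=
    (hcont.mul hk).integrable_of_hasCompactSupport hcs.mul_right
  refine ⟨Φ, hΦ, fun p hp ↦ ⟨?_, ?_⟩⟩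
  · rw [← Real.dist_eq]
    refine φ.dist_normed_convolution_le hG.aestronglyMeasurable fun x hx ↦ (H₁ _ ?_ _ ?_ ?_).le
    · have hx : |x - p| < δ := by simpa [φ, Real.dist_eq] using hx
      rw [abs_lt] at hx
      constructor <;> linarith [hp.1, hp.2]
    · constructor <;> linarith [hp.1, hp.2]
    · exact lt_of_lt_of_le (by simpa [φ] using hx) hd₁
  · have hincr : ∀ x ∈ Set.Ioo p (p + δ), slope Φ p x ≤ h p + η := by
      intro x hx
      have hxp : 0 < x - p := sub_pos.2 hx.1
      rw [slope_def_field, div_le_iff₀ hxp, hΦx, hΦx,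
        ← integral_sub (hint _ (by fun_prop)) (hint _ (by fun_prop))]
      have hone : (h p + η) * (x - p) = ∫ s, φ.normed volume s * ((h p + η) * (x - p)) := by
        rw [integral_mul_const, φ.integral_normed, one_mul]
      rw [hone]
      refine integral_mono ((hint _ (by fun_prop)).sub (hint _ (by fun_prop)))
        (hint _ (by fun_prop)) fun s ↦ ?_
      simp only
      rw [← mul_sub]
      by_cases hs : s ∈ Metric.ball (0 : ℝ) δ
      · refine mul_le_mul_of_nonneg_left ?_ (φ.nonneg_normed s)
        have hs' : |s| < δ := by simpa using hs
        rw [abs_lt] at hs'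
        have hpI := hp.1
        have hpI' := hp.2
        have := hslope (p - s) (x - s) (h p + η) (by linarith) (by linarith [hx.1])
          (by linarith [hx.2]) fun q hq ↦ by
            have := H₂ q ⟨by linarith [hq.1], by linarith [hq.2, hx.2]⟩ p
              ⟨by linarith, by linarith⟩ (by
                rw [Real.dist_eq, abs_lt]
                constructor <;> linarith [hq.1, hq.2, hx.2])
            rw [Real.dist_eq, abs_lt] at this
            linarith [this.2]
        calc _ ≤ _ := this
          _ = _ := by ring
      · have : φ.normed volume s = 0 := by
          rw [← Function.notMem_support, φ.support_normed_eq]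
          exact hs
        simp [this]
    have hder : HasDerivAt Φ (deriv Φ p) p :=
      (hΦ.differentiable (by simp) p).hasDerivAt
    have hlim : Tendsto (slope Φ p) (𝓝[>] p) (𝓝 (deriv Φ p)) :=
      hder.tendsto_slope.mono_left (nhdsWithin_mono _ fun x hx ↦ ne_of_gt hx)
    refine le_of_tendsto hlim ?_
    filter_upwards [Ioo_mem_nhdsGT (show p < p + δ by linarith)] with x hx using hincr x hx

/-- A continuous function whose derivative is at most `c` away from `0` has increments with
slope at most `c`. -/
lemma sub_le_of_deriv_le_off_zero {g : ℝ → ℝ} {x y c : ℝ} (hxy : x ≤ y)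
    (hg : ContinuousOn g (Set.Icc x y))
    (hd : ∀ q ∈ Set.Icc x y, q ≠ 0 → DifferentiableAt ℝ g q)
    (hle : ∀ q ∈ Set.Icc x y, q ≠ 0 → deriv g q ≤ c) : g y - g x ≤ c * (y - x) := by
  have key : ∀ x' y', x ≤ x' → x' ≤ y' → y' ≤ y → (0 ≤ x' ∨ y' ≤ 0) →
      g y' - g x' ≤ c * (y' - x') := by
    intro x' y' h1 h2 h3 h4
    have hne : ∀ q ∈ Set.Ioo x' y', q ∈ Set.Icc x y ∧ q ≠ 0 := fun q hq ↦
      ⟨⟨by linarith [hq.1], by linarith [hq.2]⟩, by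
        rintro rfl
        rcases h4 with h4 | h4
        · linarith [hq.1]
        · linarith [hq.2]⟩
    refine (convex_Icc x' y').image_sub_le_mul_sub_of_deriv_le
      (hg.mono (Set.Icc_subset_Icc h1 h3)) ?_ ?_ x' ⟨le_rfl, h2⟩ y' ⟨h2, le_rfl⟩ h2
    · rw [interior_Icc]
      exact fun q hq ↦ (hd q (hne q hq).1 (hne q hq).2).differentiableWithinAt
    · rw [interior_Icc]
      exact fun q hq ↦ hle q (hne q hq).1 (hne q hq).2
  by_cases h0 : 0 ≤ x
  · exact key x y le_rfl hxy le_rfl (Or.inl h0)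
  by_cases h1 : y ≤ 0
  · exact key x y le_rfl hxy le_rfl (Or.inr h1)
  push Not at h0 h1
  linarith [key x 0 le_rfl h0.le h1.le (Or.inr le_rfl), key 0 y h0.le h1.le le_rfl (Or.inl le_rfl)]

/-- A `C¹` function on `(-t, t)`, twice differentiable off `0` with second derivative at most the
continuous function `h` there, is `C¹`-close on `[-a, a]` to a smooth function with second
derivative at most `h + η`. -/
lemma exists_smooth_approx_C1 {t a : ℝ} (ha : 0 < a) (hat : a < t) (g h : ℝ → ℝ)
    (hg : DifferentiableOn ℝ g (Set.Ioo (-t) t)) (hg' : ContinuousOn (deriv g) (Set.Ioo (-t) t))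
    (hd : ∀ r ∈ Set.Ioo (-t) t, r ≠ 0 → DifferentiableAt ℝ (deriv g) r)
    (hle : ∀ r ∈ Set.Ioo (-t) t, r ≠ 0 → deriv (deriv g) r ≤ h r)
    (hh : ContinuousOn h (Set.Ioo (-t) t)) {η : ℝ} (hη : 0 < η) :
    ∃ F : ℝ → ℝ, ContDiff ℝ (⊤ : ℕ∞) F ∧ ∀ p ∈ Set.Icc (-a) a,
      |F p - g p| ≤ η ∧ |deriv F p - deriv g p| ≤ η ∧ deriv (deriv F) p ≤ h p + η := by
  obtain ⟨b, hab, hbt⟩ := exists_between hat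
  have hsub : Set.Icc (-b) b ⊆ Set.Ioo (-t) t := fun x hx ↦
    ⟨by linarith [hx.1], by linarith [hx.2]⟩
  have hbb : -b ≤ b := by linarith
  -- The derivative is extended by constants beyond `[-b, b]`, so that it can be convolved.
  let G : ℝ → ℝ := Set.IccExtend hbb ((Set.Icc (-b) b).domRestrict (deriv g))
  have hG : Continuous G :=
    (continuousOn_iff_continuous_domRestrict.1 (hg'.mono hsub)).Icc_extend'
  have hGe : ∀ x ∈ Set.Icc (-b) b, G x = deriv g x := fun x hx ↦
    Set.IccExtend_of_mem hbb _ hx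
  have hη' : 0 < η / (1 + a) := by positivity
  obtain ⟨Φ, hΦ, H⟩ := exists_smooth_approx G h hG hab (fun x y c h1 h2 h3 hc ↦ by
    have hs : Set.Icc x y ⊆ Set.Ioo (-t) t := (Set.Icc_subset_Icc h1 h3).trans hsub
    rw [hGe x ⟨h1, h2.trans h3⟩, hGe y ⟨h1.trans h2, h3⟩]
    exact sub_le_of_deriv_le_off_zero h2 (hg'.mono hs) (fun q hq h0 ↦ hd q (hs hq) h0)
      (fun q hq h0 ↦ (hle q (hs hq) h0).trans (hc q hq))) (hh.mono hsub) hη'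
  let F : ℝ → ℝ := fun x ↦ g 0 + ∫ s in (0 : ℝ)..x, Φ s
  have hF : ∀ x, HasDerivAt F (Φ x) x := fun x ↦
    ((hΦ.continuous.integral_hasStrictDerivAt 0 x).hasDerivAt).const_add _
  have hF' : deriv F = Φ := funext fun x ↦ (hF x).deriv
  have hsmall : η / (1 + a) ≤ η := div_le_self hη.le (by linarith)
  have hsuba : Set.Icc (-a) a ⊆ Set.Icc (-b) b := Set.Icc_subset_Icc (by linarith) hab.le
  have hgd : ∀ x ∈ Set.Icc (-a) a, DifferentiableAt ℝ g x := fun x hx ↦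
    (hg x (hsub (hsuba hx))).differentiableAt (isOpen_Ioo.mem_nhds (hsub (hsuba hx)))
  refine ⟨F, contDiff_infty_iff_deriv.2 ⟨fun x ↦ (hF x).differentiableAt, hF' ▸ hΦ⟩,
    fun p hp ↦ ⟨?_, ?_, ?_⟩⟩
  · have h0 : (0 : ℝ) ∈ Set.Icc (-a) a := ⟨by linarith, ha.le⟩
    have := (convex_Icc (-a) a).norm_image_sub_le_of_norm_deriv_le
      (f := fun x ↦ F x - g x) (C := η / (1 + a))
      (fun x hx ↦ ((hF x).differentiableAt).sub (hgd x hx))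
      (fun x hx ↦ by
        have := (H x hx).1
        rw [hGe x (hsuba hx)] at this
        rw [show deriv (fun x ↦ F x - g x) x = Φ x - deriv g x from
          ((hF x).sub (hgd x hx).hasDerivAt).deriv]
        exact this) h0 hp
    have hF0 : F 0 - g 0 = 0 := by simp [F]
    rw [hF0, sub_zero, sub_zero, Real.norm_eq_abs, Real.norm_eq_abs] at this
    have hpa : |p| ≤ 1 + a := by
      rw [abs_le]; constructor <;> linarith [hp.1, hp.2]
    calc _ ≤ _ := this
      _ ≤ η / (1 + a) * (1 + a) := by gcongr
      _ = η := by field_simp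
  · have := (H p hp).1
    rw [hGe p (hsuba hp)] at this
    rw [hF']
    exact this.trans hsmall
  · rw [hF']
    linarith [(H p hp).2]

/-- For a positive warping function, the curvature bound is an upper bound on its second
derivative `s`. -/
lemma curv_ge_iff {w s z v L : ℝ} (hz : 0 < z) :
    Real.exp (2 * w) * (-s / z - v ^ 2) ≥ L ↔ s ≤ -(L * Real.exp (-(2 * w)) + v ^ 2) * z := by
  have he := Real.exp_pos (2 * w)
  rw [Real.exp_neg, ge_iff_le, ← div_le_iff₀' he, le_sub_iff_add_le, le_div_iff₀ hz,
    ← div_eq_mul_inv]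
  constructor <;> intro h <;> linarith

/-- First and second derivatives of `g + χ (F - g)`. -/
lemma deriv_interp {χ F g : ℝ → ℝ} (hχ : ContDiff ℝ (⊤ : ℕ∞) χ) (hF : ContDiff ℝ (⊤ : ℕ∞) F)
    {s : Set ℝ} (hs : IsOpen s) (hg : DifferentiableOn ℝ g s) {r : ℝ} (hr : r ∈ s) :
    deriv (fun x ↦ g x + χ x * (F x - g x)) r =
      deriv g r + (deriv χ r * (F r - g r) + χ r * (deriv F r - deriv g r)) ∧
    (DifferentiableAt ℝ (deriv g) r → deriv (deriv fun x ↦ g x + χ x * (F x - g x)) r =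
      (1 - χ r) * deriv (deriv g) r + χ r * deriv (deriv F) r +
        2 * deriv χ r * (deriv F r - deriv g r) + deriv (deriv χ) r * (F r - g r)) := by
  have hχd (x : ℝ) : HasDerivAt χ (deriv χ x) x := (hχ.differentiable (by simp) x).hasDerivAt
  have hFd (x : ℝ) : HasDerivAt F (deriv F x) x := (hF.differentiable (by simp) x).hasDerivAt
  have hχd' (x : ℝ) : HasDerivAt (deriv χ) (deriv (deriv χ) x) x :=
    ((contDiff_infty_iff_deriv.1 hχ).2.differentiable (by simp) x).hasDerivAt
  have hFd' (x : ℝ) : HasDerivAt (deriv F) (deriv (deriv F) x) x :=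
    ((contDiff_infty_iff_deriv.1 hF).2.differentiable (by simp) x).hasDerivAt
  have h1 : ∀ x ∈ s, deriv (fun x ↦ g x + χ x * (F x - g x)) x =
      deriv g x + (deriv χ x * (F x - g x) + χ x * (deriv F x - deriv g x)) := by
    intro x hx
    have hgd : HasDerivAt g (deriv g x) x :=
      ((hg x hx).differentiableAt (hs.mem_nhds hx)).hasDerivAt
    exact (hgd.add ((hχd x).mul ((hFd x).sub hgd))).deriv
  refine ⟨h1 r hr, fun hgd' ↦ ?_⟩
  have hgd : HasDerivAt g (deriv g r) r :=
    ((hg r hr).differentiableAt (hs.mem_nhds hr)).hasDerivAt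
  have heq : deriv (fun x ↦ g x + χ x * (F x - g x)) =ᶠ[𝓝 r] fun x ↦
      deriv g x + (deriv χ x * (F x - g x) + χ x * (deriv F x - deriv g x)) := by
    filter_upwards [hs.mem_nhds hr] with x hx using h1 x hx
  rw [heq.deriv_eq]
  refine ((hgd'.hasDerivAt.add (((hχd' r).mul ((hFd r).sub hgd)).add
    ((hχd r).mul ((hFd' r).sub hgd'.hasDerivAt)))).deriv).trans ?_
  simp only [Pi.sub_apply]
  ring


/-- smoothing lemma for the warping factor `f̄` (Lemma 3.4 of the
paper): a positive C^{1,1} function `f̄`, smooth away from the junction `r = 0`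
and satisfying the scalar curvature lower bound on both sides, can be replaced
by a smooth positive function `f`, C¹-close to `f̄`, equal to `f̄` outside
`(-μ, μ)`, with scalar curvature bound `λ - μ`. -/
theorem stmt_3 (t : ℝ) (ht : 0 < t) (u fb : ℝ → ℝ)
    (hu : ContDiffOn ℝ (⊤ : ℕ∞) u (Set.Ioo (-t) t))
    (hfbpos : ∀ r ∈ Set.Ioo (-t) t, 0 < fb r)
    (hfbdiff : DifferentiableOn ℝ fb (Set.Ioo (-t) t))
    (hfbC11 : ∀ a b : ℝ, -t < a → b < t →
      ∃ K : NNReal, LipschitzOnWith K (deriv fb) (Set.Icc a b))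
    (hfbleft : ContDiffOn ℝ (⊤ : ℕ∞) fb (Set.Ioc (-t) 0))
    (hfbright : ContDiffOn ℝ (⊤ : ℕ∞) fb (Set.Ico 0 t))
    (lam : ℝ)
    (hcurv : ∀ r ∈ Set.Ioo (-t) t, r ≠ 0 →
      Real.exp (2 * u r) *
        (-(deriv (deriv fb) r) / fb r - (deriv u r) ^ 2) ≥ lam) :
    ∀ μ ∈ Set.Ioo (0 : ℝ) (t / 2),
      ∃ f : ℝ → ℝ, ContDiffOn ℝ (⊤ : ℕ∞) f (Set.Ioo (-t) t) ∧
        (∀ r ∈ Set.Ioo (-t) t, 0 < f r) ∧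
        (∀ r ∈ Set.Ioo (-t) t, |f r - fb r| + |deriv f r - deriv fb r| ≤ μ) ∧
        (∀ r ∈ Set.Ioo (-t) t, r ∉ Set.Ioo (-μ) μ → f r = fb r) ∧
        (∀ r ∈ Set.Ioo (-t) t,
          Real.exp (2 * u r) *
            (-(deriv (deriv f) r) / f r - (deriv u r) ^ 2) ≥ lam - μ) := by
  intro μ hμ
  obtain ⟨hμ0, hμt⟩ := hμ
  have hμt' : μ < t := by linarith
  set I := Set.Ioo (-t) t with hI
  have hIo : IsOpen I := isOpen_Ioo
  have hKI : Set.Icc (-μ) μ ⊆ I := fun x hx ↦ ⟨by linarith [hx.1], by linarith [hx.2]⟩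
  have hfbsm : ∀ r ∈ I, r ≠ 0 → ContDiffAt ℝ (⊤ : ℕ∞) fb r := by
    intro r hr h0
    rcases lt_or_gt_of_ne h0 with h | h
    · exact hfbleft.contDiffAt (Filter.mem_of_superset (Ioo_mem_nhds hr.1 h) Set.Ioo_subset_Ioc_self)
    · exact hfbright.contDiffAt
        (Filter.mem_of_superset (Ioo_mem_nhds h hr.2) Set.Ioo_subset_Ico_self)
  have hdd : ∀ r ∈ I, r ≠ 0 → DifferentiableAt ℝ (deriv fb) r := by
    intro r hr h0
    have hopen : IsOpen (I \ {0}) := hIo.sdiff isClosed_singleton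
    have : ContDiffOn ℝ (⊤ : ℕ∞) fb (I \ {0}) := fun x hx ↦
      (hfbsm x hx.1 hx.2).contDiffWithinAt
    exact ((contDiffOn_infty_iff_deriv_of_isOpen hopen).1 this).2.differentiableOn (by simp)
      |>.differentiableAt (hopen.mem_nhds ⟨hr, h0⟩)
  have hfb' : ContinuousOn (deriv fb) I := by
    intro r hr
    obtain ⟨b, hb1, hb2⟩ := exists_between (abs_lt.2 hr)
    obtain ⟨K, hK⟩ := hfbC11 (-b) b (by linarith) hb2
    rw [abs_lt] at hb1
    exact (hK.continuousOn.continuousAt (Icc_mem_nhds hb1.1 hb1.2)).continuousWithinAt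
  have hfbc : ContinuousOn fb I := hfbdiff.continuousOn
  have huc : ContinuousOn u I := hu.continuousOn
  have hu'c : ContinuousOn (deriv u) I :=
    ((contDiffOn_infty_iff_deriv_of_isOpen hIo).1 hu).2.continuousOn
  let h : ℝ → ℝ := fun r ↦ -(lam * Real.exp (-(2 * u r)) + (deriv u r) ^ 2) * fb r
  have hh : ContinuousOn h I := by fun_prop
  have hle : ∀ r ∈ I, r ≠ 0 → deriv (deriv fb) r ≤ h r := fun r hr h0 ↦
    (curv_ge_iff (hfbpos r hr)).1 (hcurv r hr h0)
  let φ : ContDiffBump (0 : ℝ) := ⟨μ / 3, 2 * μ / 3, by linarith, by linarith⟩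
  let χ : ℝ → ℝ := φ
  have hχ : ContDiff ℝ (⊤ : ℕ∞) χ := φ.contDiff
  have hχ' := (contDiff_infty_iff_deriv.1 hχ).2
  have hχ'' := (contDiff_infty_iff_deriv.1 hχ').2
  have hχ0 : ∀ r, 0 ≤ χ r := fun r ↦ φ.nonneg
  have hχ1 : ∀ r, χ r ≤ 1 := fun r ↦ φ.le_one
  have hχone : ∀ r, |r| ≤ μ / 3 → χ r = 1 := fun r hr ↦
    φ.one_of_mem_closedBall (by simpa [φ] using hr)
  have hχzero : ∀ r, 2 * μ / 3 ≤ |r| → χ r = 0 := fun r hr ↦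
    φ.zero_of_le_dist (by simpa [φ] using hr)
  -- Compactness constants on `[-μ, μ]`: bounds for the derivatives of the cutoff and for the
  -- coefficient of the curvature inequality, and lower bounds for `fb` and for the gain
  -- `μ e^{-2u} fb` obtained by relaxing the curvature bound from `lam` to `lam - μ`.
  have hKc : IsCompact (Set.Icc (-μ) μ) := isCompact_Icc
  have hKne : (Set.Icc (-μ) μ).Nonempty := ⟨0, by linarith, hμ0.le⟩
  obtain ⟨C₁, hC₁⟩ := hKc.exists_bound_of_continuousOn hχ'.continuous.continuousOn
  obtain ⟨C₂, hC₂⟩ := hKc.exists_bound_of_continuousOn hχ''.continuous.continuousOn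
  obtain ⟨M, hM⟩ := hKc.exists_bound_of_continuousOn
    (f := fun r ↦ (lam - μ) * Real.exp (-(2 * u r)) + (deriv u r) ^ 2)
    ((show ContinuousOn _ I by fun_prop).mono hKI)
  obtain ⟨r₁, hr₁, hm₁⟩ := hKc.exists_isMinOn hKne
    (f := fun r ↦ μ * Real.exp (-(2 * u r)) * fb r)
    ((show ContinuousOn _ I by fun_prop).mono hKI)
  obtain ⟨r₂, hr₂, hm₂⟩ := hKc.exists_isMinOn hKne (hfbc.mono hKI)
  have hC₁0 : 0 ≤ C₁ := (norm_nonneg _).trans (hC₁ _ hr₁)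
  have hC₂0 : 0 ≤ C₂ := (norm_nonneg _).trans (hC₂ _ hr₁)
  have hM0 : 0 ≤ M := (norm_nonneg _).trans (hM _ hr₁)
  set m₁ := μ * Real.exp (-(2 * u r₁)) * fb r₁
  set m₂ := fb r₂
  have hm₁0 : 0 < m₁ := mul_pos (mul_pos hμ0 (Real.exp_pos _)) (hfbpos _ (hKI hr₁))
  have hm₂0 : 0 < m₂ := hfbpos _ (hKI hr₂)
  obtain ⟨η, hη, hη₁, hη₂, hη₃⟩ : ∃ η > 0, η * (1 + 2 * C₁ + C₂ + M) ≤ m₁ ∧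
      η * (2 + C₁) ≤ μ ∧ η < m₂ := by
    refine ⟨min (m₁ / (1 + 2 * C₁ + C₂ + M)) (min (μ / (2 + C₁)) (m₂ / 2)), by positivity,
      ?_, ?_, ?_⟩
    · rw [← le_div_iff₀ (by positivity)]
      exact min_le_left _ _
    · rw [← le_div_iff₀ (by positivity)]
      exact (min_le_right _ _).trans (min_le_left _ _)
    · exact lt_of_le_of_lt ((min_le_right _ _).trans (min_le_right _ _)) (by linarith)
  obtain ⟨F, hF, HF⟩ := exists_smooth_approx_C1 hμ0 hμt' fb h hfbdiff hfb' hdd hle hh hη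
  let f : ℝ → ℝ := fun x ↦ fb x + χ x * (F x - fb x)
  have hf0 : f =ᶠ[𝓝 0] F := by
    filter_upwards [Metric.closedBall_mem_nhds (0 : ℝ) (show 0 < μ / 3 by linarith)] with x hx
    simp [f, hχone x (by simpa using hx)]
  have hfout : ∀ r, r ∉ Set.Ioo (-μ) μ → f =ᶠ[𝓝 r] fb := by
    intro r hr
    have hr' : 2 * μ / 3 < |r| := by
      by_contra! hcon
      rw [abs_le] at hcon
      exact hr ⟨by linarith [hcon.1], by linarith [hcon.2]⟩
    filter_upwards [continuous_abs.continuousAt.eventually (lt_mem_nhds hr')] with x hx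
    simp [f, hχzero x hx.le]
  have hfd : ∀ r ∈ Set.Ioo (-μ) μ, |f r - fb r| ≤ η := by
    intro r hr
    have : f r - fb r = χ r * (F r - fb r) := by simp [f]
    rw [this, abs_mul, abs_of_nonneg (hχ0 r)]
    exact (mul_le_of_le_one_left (abs_nonneg _) (hχ1 r)).trans (HF r (Set.Ioo_subset_Icc_self hr)).1
  have hfpos : ∀ r ∈ I, 0 < f r := by
    intro r hr
    by_cases hrμ : r ∈ Set.Ioo (-μ) μ
    · have h1 := (abs_le.1 (hfd r hrμ)).1
      have h2 : m₂ ≤ fb r := hm₂ (Set.Ioo_subset_Icc_self hrμ)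
      linarith
    · rw [(hfout r hrμ).eq_of_nhds]
      exact hfbpos r hr
  refine ⟨f, ?_, hfpos, ?_, fun r _ hr ↦ (hfout r hr).eq_of_nhds, ?_⟩
  · intro r hr
    refine ContDiffAt.contDiffWithinAt ?_
    by_cases h0 : r = 0
    · subst h0
      exact hF.contDiffAt.congr_of_eventuallyEq hf0
    · exact (hfbsm r hr h0).add (hχ.contDiffAt.mul (hF.contDiffAt.sub (hfbsm r hr h0)))
  · intro r hr
    by_cases hrμ : r ∈ Set.Ioo (-μ) μ
    · have hrK := Set.Ioo_subset_Icc_self hrμ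
      obtain ⟨H1, H2, -⟩ := HF r hrK
      have hd : deriv f r - deriv fb r =
          deriv χ r * (F r - fb r) + χ r * (deriv F r - deriv fb r) := by
        rw [(deriv_interp hχ hF hIo hfbdiff hr).1]
        ring
      have h1 : |deriv χ r * (F r - fb r)| ≤ C₁ * η := by
        rw [abs_mul]
        exact mul_le_mul (hC₁ r hrK) H1 (abs_nonneg _) hC₁0
      have h2 : |χ r * (deriv F r - deriv fb r)| ≤ η := by
        rw [abs_mul, abs_of_nonneg (hχ0 r)]
        exact (mul_le_of_le_one_left (abs_nonneg _) (hχ1 r)).trans H2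
      have h3 := abs_add_le (deriv χ r * (F r - fb r)) (χ r * (deriv F r - deriv fb r))
      rw [hd]
      linarith [hfd r hrμ]
    · rw [(hfout r hrμ).eq_of_nhds, (hfout r hrμ).deriv_eq]
      simpa using hμ0.le
  · intro r hr
    by_cases hrμ : r ∈ Set.Ioo (-μ) μ
    · have hrK := Set.Ioo_subset_Icc_self hrμ
      obtain ⟨H1, H2, H3⟩ := HF r hrK
      have hf2 : deriv (deriv f) r ≤ h r + η * (1 + 2 * C₁ + C₂) := by
        by_cases h0 : r = 0
        · have : deriv (deriv f) r = deriv (deriv F) r := by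
            rw [h0]
            exact hf0.deriv.deriv_eq
          rw [this]
          have : 0 ≤ η * (2 * C₁ + C₂) := by positivity
          linarith
        · have e1 : (1 - χ r) * deriv (deriv fb) r ≤ (1 - χ r) * h r :=
            mul_le_mul_of_nonneg_left (hle r hr h0) (by linarith [hχ1 r])
          have e2 : χ r * deriv (deriv F) r ≤ χ r * h r + η := by
            have := mul_le_mul_of_nonneg_left H3 (hχ0 r)
            have := mul_le_of_le_one_left hη.le (hχ1 r)
            linarith
          have e3 : deriv χ r * (deriv F r - deriv fb r) ≤ C₁ * η := by
            refine (le_abs_self _).trans ?_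
            rw [abs_mul]
            exact mul_le_mul (hC₁ r hrK) H2 (abs_nonneg _) hC₁0
          have e4 : deriv (deriv χ) r * (F r - fb r) ≤ C₂ * η := by
            refine (le_abs_self _).trans ?_
            rw [abs_mul]
            exact mul_le_mul (hC₂ r hrK) H1 (abs_nonneg _) hC₂0
          rw [(deriv_interp hχ hF hIo hfbdiff hr).2 (hdd r hr h0)]
          linarith
      rw [curv_ge_iff (hfpos r hr)]
      -- Replacing `fb` by `f` in the coefficient term costs at most `M η`.
      have hMr : ((lam - μ) * Real.exp (-(2 * u r)) + deriv u r ^ 2) * (f r - fb r) ≤ M * η := by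
        refine (le_abs_self _).trans ?_
        rw [abs_mul]
        exact mul_le_mul (hM r hrK) (hfd r hrμ) (abs_nonneg _) hM0
      have hmr : m₁ ≤ μ * Real.exp (-(2 * u r)) * fb r := hm₁ hrK
      simp only [h] at hf2
      linarith
    · have hfe := hfout r hrμ
      rw [hfe.deriv.deriv_eq, hfe.eq_of_nhds]
      have h0 : r ≠ 0 := by
        rintro rfl
        exact hrμ ⟨by linarith, hμ0⟩
      linarith [hcurv r hr h0]
end
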